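/- arXiv:1901.00832 — 4 statements merged into one kernel-verified Lean document; each statement's English description precedes it below -/
import Mathlib

section
/- Correctness of Paillier decryption: let N = pq with p, q distinct primes, let φ(N) = (p−1)(q−1), and assume gcd(N, φ(N)) = 1. Let m be a natural number with 0 ≤ m < N, let r be an integer coprime to N, and let c = (1+N)^m · r^N mod N². Then N divides (c^{φ(N)} mod N²) − 1, and ( ((c^{φ(N)} mod N²) − 1)/N ) · φ(N)^{−1} mod N = m, where φ(N)^{−1} denotes the multiplicative inverse of φ(N) modulo N. -/
theorem paillier_aux_pow (a x : ℤ) (n : ℕ) : a ^ 2 ∣ (1 + a * x) ^ n - (1 + n * a * x) := by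
  induction n with
  | zero => simp
  | succ k ih =>
    obtain ⟨t, ht⟩ := ih
    refine ⟨t * (1 + a * x) + k * x ^ 2, ?_⟩
    have h : (1 + a * x) ^ k = (1 + k * a * x) + a ^ 2 * t := by linarith
    rw [pow_succ, h]
    push_cast
    ring

/-- Correctness of Paillier decryption: with `N = pq` (`p, q` distinct primes),
`φ = (p−1)(q−1)`, `gcd(N, φ) = 1`, a message `0 ≤ m < N`, randomness `r`
coprime to `N`, and ciphertext `c = (1+N)^m · r^N mod N²`, we have
`N ∣ (c^φ mod N²) − 1` and `((c^φ mod N²) − 1)/N · φ⁻¹ ≡ m (mod N)`. -/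
theorem paillier_decryption_correct (p q : ℕ) (hp : p.Prime) (hq : q.Prime) (hpq : p ≠ q)
    (N φ : ℕ) (hN : N = p * q) (hφ : φ = (p - 1) * (q - 1)) (hgcd : Nat.gcd N φ = 1)
    (m : ℕ) (hm : m < N) (r : ℤ) (hr : IsCoprime r (N : ℤ))
    (c : ℤ) (hc : c = ((1 + (N : ℤ)) ^ m * r ^ N) % ((N : ℤ) ^ 2)) :
    (N : ℤ) ∣ (c ^ φ % ((N : ℤ) ^ 2)) - 1 ∧
      ((((c ^ φ % ((N : ℤ) ^ 2)) - 1) / (N : ℤ) : ℤ) : ZMod N) * (φ : ZMod N)⁻¹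
        = (m : ZMod N) := by
  have htot : φ = Nat.totient N := by
    rw [hN, Nat.totient_mul ((Nat.coprime_primes hp hq).2 hpq), Nat.totient_prime hp,
      Nat.totient_prime hq, hφ]
  have hNpos : 0 < N := by omega
  have hN0 : (N : ℤ) ≠ 0 := by exact_mod_cast hNpos.ne'
  have hr1 : (N : ℤ) ∣ r ^ φ - 1 := by
    have hu : IsUnit (r : ZMod N) := by
      have h := hr.map (Int.castRingHom (ZMod N))
      simpa [isCoprime_zero_right] using h
    obtain ⟨y, hy⟩ := hu
    have h := congrArg Units.val (ZMod.pow_totient y)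
    rw [Units.val_pow_eq_pow_val, hy, ← htot, Units.val_one] at h
    apply (ZMod.intCast_zmod_eq_zero_iff_dvd _ _).1
    push_cast
    rw [h, sub_self]
  obtain ⟨k, hk⟩ := hr1
  have hrk : r ^ φ = 1 + N * k := by linarith
  obtain ⟨u, hu⟩ := paillier_aux_pow N k N
  obtain ⟨v, hv⟩ := paillier_aux_pow N 1 (m * φ)
  have h1 : (1 + (N : ℤ) * 1) ^ (m * φ) = (1 + m * φ * N) + N ^ 2 * v := by
    push_cast at hv
    linarith
  have h2 : (1 + (N : ℤ) * k) ^ N = 1 + N ^ 2 * (k + u) := by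
    linarith
  have hcm : c ^ φ ≡ ((1 + (N : ℤ)) ^ m * r ^ N) ^ φ [ZMOD (N : ℤ) ^ 2] := by
    rw [hc]
    exact (Int.mod_modEq _ _).pow φ
  have hexp : ((1 + (N : ℤ)) ^ m * r ^ N) ^ φ
      = ((1 + m * φ * N) + N ^ 2 * v) * (1 + N ^ 2 * (k + u)) := by
    rw [← h1, ← h2, ← hrk, mul_pow, ← pow_mul, ← pow_mul, ← pow_mul, mul_one, mul_comm N φ]
  have hmod : c ^ φ % (N : ℤ) ^ 2 ≡ ((1 + m * φ * N) + N ^ 2 * v) * (1 + N ^ 2 * (k + u))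
      [ZMOD (N : ℤ) ^ 2] := by
    rw [← hexp]
    exact (Int.mod_modEq _ _).trans hcm
  obtain ⟨w, hw⟩ := hmod.symm.dvd
  have key : c ^ φ % (N : ℤ) ^ 2 - 1
      = N * (m * φ + N * (w + v + (k + u) * (1 + m * φ * N + N ^ 2 * v))) := by
    linear_combination hw
  refine ⟨⟨_, key⟩, ?_⟩
  rw [key, Int.mul_ediv_cancel_left _ hN0]
  have hinv : (φ : ZMod N) * (φ : ZMod N)⁻¹ = 1 :=
    ZMod.coe_mul_inv_eq_one φ (Nat.Coprime.symm hgcd)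
  push_cast
  rw [ZMod.natCast_self, zero_mul, add_zero, mul_assoc, hinv, mul_one]
end

section
/- Scalar multiplication homomorphism of Paillier ciphertexts: let N = pq with p, q distinct primes, let m and k be natural numbers and r an integer coprime to N. Then ((1+N)^m · r^N)^k ≡ (1+N)^{(k·m) mod N} · (r^k)^N (mod N²); that is, raising a Paillier encryption of m to the k-th power yields a Paillier encryption of (k·m) mod N with randomness r^k. -/
theorem paillier_aux (N : ℤ) (j : ℕ) : ∃ c : ℤ, (1 + N) ^ j = 1 + j * N + c * N ^ 2 := by
  induction j with
  | zero => exact ⟨0, by simp⟩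
  | succ n ih =>
    obtain ⟨c, hc⟩ := ih
    refine ⟨n + c + c * N, ?_⟩
    rw [pow_succ, hc]
    push_cast
    ring

/-- Scalar multiplication homomorphism of Paillier ciphertexts: the `k`-th power
of an encryption of `m` is an encryption of `(k·m) mod N` with randomness `r^k`. -/
theorem paillier_scalar_homomorphism (p q : ℕ) (hp : p.Prime) (hq : q.Prime) (hpq : p ≠ q)
    (N : ℕ) (hN : N = p * q) (m k : ℕ) (r : ℤ) (hr : IsCoprime r (N : ℤ)) :
    ((1 + (N : ℤ)) ^ m * r ^ N) ^ k ≡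
      (1 + (N : ℤ)) ^ ((k * m) % N) * (r ^ k) ^ N [ZMOD ((N : ℤ) ^ 2)] := by
  have e : ((1 + (N : ℤ)) ^ m * r ^ N) ^ k = (1 + (N : ℤ)) ^ (k * m) * (r ^ k) ^ N := by
    rw [mul_pow, ← pow_mul, ← pow_mul, ← pow_mul, mul_comm m k, mul_comm N k]
  rw [e]
  refine Int.ModEq.mul_right _ ?_
  obtain ⟨a, ha⟩ := paillier_aux N (k * m)
  obtain ⟨b, hb⟩ := paillier_aux N (k * m % N)
  have h : ((k * m : ℕ) : ℤ) = ((k * m % N : ℕ) : ℤ) + N * ((k * m / N : ℕ) : ℤ) := by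
    exact_mod_cast (Nat.mod_add_div (k * m) N).symm
  rw [ha, hb, h]
  apply Int.ModEq.symm
  rw [Int.modEq_iff_dvd]
  exact ⟨((k * m / N : ℕ) : ℤ) + a - b, by ring⟩
end

section
/- Let N = pq with p, q distinct primes and assume gcd(N, φ(N)) = 1, where φ(N) = (p−1)(q−1). Then the map (m, r) ↦ (1+N)^m · r^N, from (ℤ/Nℤ) × (ℤ/Nℤ)^× to the group of units of ℤ/N²ℤ, is a bijection. -/
theorem pail_pow (N k : ℕ) : (1 + (N : ZMod (N ^ 2))) ^ k = 1 + (N : ZMod (N^2)) * k := by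
  have h : (N : ZMod (N^2)) * N = 0 := by
    have := ZMod.natCast_self (N^2)
    push_cast at this
    rw [← this]; ring
  induction k with
  | zero => simp
  | succ k ih =>
    rw [pow_succ (1 + (N : ZMod (N ^ 2))) k, ih]; push_cast
    linear_combination (k : ZMod (N^2)) * h

theorem pail_mul_iff (N a b : ℕ) (hN : N ≠ 0) :
    (N : ZMod (N^2)) * a = N * b ↔ (a : ZMod N) = b := by
  have e1 : (N : ZMod (N^2)) * a = N * b ↔ N * a ≡ N * b [MOD N^2] := by
    rw [← ZMod.natCast_eq_natCast_iff]; push_cast; rfl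
  rw [e1, ZMod.natCast_eq_natCast_iff, sq]
  exact ⟨fun h => Nat.ModEq.mul_left_cancel' hN h, fun h => Nat.ModEq.mul_left' N h⟩

/-- The Paillier encryption map `(m, r) ↦ (1+N)^m · r^N` from
`(ℤ/Nℤ) × (ℤ/Nℤ)ˣ` to the units of `ℤ/N²ℤ` is a bijection, when `N = pq`
for distinct primes `p, q` with `gcd(N, φ(N)) = 1`. -/
theorem paillier_encryption_bijective (p q : ℕ) (hp : p.Prime) (hq : q.Prime) (hpq : p ≠ q)
    (N : ℕ) (hN : N = p * q) (hgcd : Nat.gcd N ((p - 1) * (q - 1)) = 1) :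
    ∀ u : (ZMod (N ^ 2))ˣ, ∃! x : ZMod N × (ZMod N)ˣ,
      (u : ZMod (N ^ 2)) =
        (1 + (N : ZMod (N ^ 2))) ^ x.1.val * (((x.2 : ZMod N).val : ZMod (N ^ 2))) ^ N := by
  intro u
  have hN0 : N ≠ 0 := by rw [hN]; exact Nat.mul_ne_zero hp.ne_zero hq.ne_zero
  have : NeZero N := ⟨hN0⟩
  have : NeZero (N^2) := ⟨pow_ne_zero 2 hN0⟩
  have hcop : (Nat.card (ZMod N)ˣ).Coprime N := by
    rw [Nat.card_eq_fintype_card, ZMod.card_units_eq_totient]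
    have : Nat.totient N = (p - 1) * (q - 1) := by
      rw [hN, Nat.totient_mul ((Nat.coprime_primes hp hq).2 hpq), Nat.totient_prime hp,
        Nat.totient_prime hq]
    rw [this]
    exact (Nat.Coprime.symm hgcd)
  have hd : N ∣ N^2 := dvd_pow_self N two_ne_zero
  let f : ZMod (N^2) →+* ZMod N := ZMod.castHom hd (ZMod N)
  have hker : ∀ t : ZMod (N^2), f t = 0 → ∃ k : ℕ, t = (N : ZMod (N^2)) * k := by
    intro t ht
    have h1 : ((t.val : ℕ) : ZMod (N^2)) = t := ZMod.natCast_zmod_val t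
    rw [← h1, map_natCast, ZMod.natCast_eq_zero_iff] at ht
    obtain ⟨k, hk⟩ := ht
    refine ⟨k, ?_⟩
    rw [← h1, hk]; push_cast; rfl
  have hfr : ∀ r : (ZMod N)ˣ, f (((r : ZMod N).val : ZMod (N^2))) = r := by
    intro r
    rw [map_natCast, ZMod.natCast_zmod_val]
  have hunit : ∀ r : (ZMod N)ˣ, IsUnit (((r : ZMod N).val : ZMod (N^2))) := by
    intro r
    rw [ZMod.isUnit_iff_coprime]
    exact Nat.Coprime.pow_right 2 (ZMod.val_coe_unit_coprime r)
  have hf : ∀ (m : ZMod N) (r : (ZMod N)ˣ), f ((1 + (N : ZMod (N ^ 2))) ^ m.val *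
      (((r : ZMod N).val : ZMod (N ^ 2))) ^ N) = ((r ^ N : (ZMod N)ˣ) : ZMod N) := by
    intro m r
    rw [map_mul, map_pow, map_pow, hfr, map_add, map_one, map_natCast, ZMod.natCast_self]
    simp
  let v : (ZMod N)ˣ := Units.map f.toMonoidHom u
  obtain ⟨r, hr⟩ := (powCoprime hcop).surjective v
  have hr : r ^ N = v := hr
  obtain ⟨w, hw⟩ := hunit r
  have ht : f (((u * (w ^ N)⁻¹ : (ZMod (N^2))ˣ) : ZMod (N^2)) - 1) = 0 := by
    have h2 : Units.map f.toMonoidHom w = r := by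
      ext
      change f w = r
      rw [hw, hfr]
    have h3 : Units.map f.toMonoidHom (u * (w ^ N)⁻¹) = 1 := by
      rw [map_mul, map_inv, map_pow, h2, hr]
      exact mul_inv_cancel v
    have h4 : f ((u * (w ^ N)⁻¹ : (ZMod (N^2))ˣ) : ZMod (N^2)) = 1 := congrArg Units.val h3
    rw [map_sub, h4, map_one, sub_self]
  obtain ⟨k, hk⟩ := hker _ ht
  have hex : (u : ZMod (N^2)) = (1 + (N : ZMod (N ^ 2))) ^ (k : ZMod N).val *
      (((r : ZMod N).val : ZMod (N ^ 2))) ^ N := by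
    rw [pail_pow, (pail_mul_iff N _ k hN0).2 (ZMod.natCast_zmod_val _), ← hk, ← hw,
      add_sub_cancel, ← Units.val_pow_eq_pow_val, ← Units.val_mul, inv_mul_cancel_right]
  refine ⟨(k, r), hex, ?_⟩
  rintro ⟨m, s⟩ hms
  dsimp only at hms
  have hs : s = r := by
    apply (powCoprime hcop).injective
    change s ^ N = r ^ N
    ext
    rw [← hf m s, ← hf k r, ← hms, ← hex]
  subst hs
  rw [hex] at hms
  have h5 := ((hunit s).pow N).mul_right_cancel hms
  rw [pail_pow, pail_pow] at h5
  have h6 := (pail_mul_iff N _ _ hN0).1 (add_left_cancel h5)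
  rw [ZMod.natCast_zmod_val, ZMod.natCast_zmod_val] at h6
  rw [h6]
end

section
/- Homomorphic evaluation of Round 2: let N = pq with p, q distinct primes, let n be a natural number, let c : Fin n → ℕ with c i ≤ 1 for all i, let f : Fin n → ℕ with f i ≤ 1 for all i, and for each i let r i be an integer coprime to N and E i = (1+N)^{c i} · (r i)^N mod N² be a Paillier encryption of c i. Then Π_{i=1}^{n} (E i)^{f i} ≡ (1+N)^{(Σ_{i=1}^{n} f i · c i) mod N} · (Π_{i=1}^{n} (r i)^{f i})^N (mod N²); that is, the product of the ciphertexts E i raised to the powers f i is a Paillier encryption of (Σ_i f_i·c_i) mod N. -/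
theorem one_add_pow_modEq (N : ℤ) (k : ℕ) :
    (1 + N) ^ k ≡ 1 + k * N [ZMOD (N ^ 2)] := by
  induction k with
  | zero => simp [Int.ModEq.refl]
  | succ k ih =>
    rw [pow_succ (1 + N) k]
    refine (ih.mul_right (1 + N)).trans ?_
    refine (Int.modEq_iff_dvd.2 ⟨-(k : ℤ), ?_⟩)
    push_cast
    ring

theorem one_add_pow_mod (N : ℕ) (k : ℕ) :
    (1 + (N : ℤ)) ^ k ≡ (1 + (N : ℤ)) ^ (k % N) [ZMOD ((N : ℤ) ^ 2)] := by
  refine (one_add_pow_modEq N k).trans (Int.ModEq.trans ?_ (one_add_pow_modEq N (k % N)).symm)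
  refine (Int.modEq_iff_dvd.2 ⟨-((k / N : ℕ) : ℤ), ?_⟩)
  have h : (k : ℤ) = ((k % N : ℕ) : ℤ) + N * ((k / N : ℕ) : ℤ) := by
    exact_mod_cast (Nat.mod_add_div k N).symm
  linear_combination (-(N : ℤ)) * h

theorem prod_modEq_aux {ι : Type*} (s : Finset ι) (a b : ι → ℤ) (m : ℤ)
    (h : ∀ i, a i ≡ b i [ZMOD m]) : (∏ i ∈ s, a i) ≡ ∏ i ∈ s, b i [ZMOD m] := by
  classical
  induction s using Finset.induction_on with
  | empty => simp [Int.ModEq.refl]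
  | insert x s hx ih =>
    rw [Finset.prod_insert hx, Finset.prod_insert hx]
    exact (h x).mul ih

/-- Homomorphic evaluation of Round 2: the product of Alice's Paillier
ciphertexts `E i` raised to the powers `f i` is a Paillier encryption of
`(Σ_i f i · c i) mod N` with randomness `Π_i (r i)^(f i)`. -/
theorem paillier_round_two (p q : ℕ) (hp : p.Prime) (hq : q.Prime) (hpq : p ≠ q)
    (N : ℕ) (hN : N = p * q) (n : ℕ) (c f : Fin n → ℕ)
    (hc : ∀ i, c i ≤ 1) (hf : ∀ i, f i ≤ 1)
    (r : Fin n → ℤ) (hr : ∀ i, IsCoprime (r i) (N : ℤ))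
    (E : Fin n → ℤ)
    (hE : ∀ i, E i = ((1 + (N : ℤ)) ^ (c i) * (r i) ^ N) % ((N : ℤ) ^ 2)) :
    (∏ i, (E i) ^ (f i)) ≡
      (1 + (N : ℤ)) ^ ((∑ i, f i * c i) % N) * (∏ i, (r i) ^ (f i)) ^ N
        [ZMOD ((N : ℤ) ^ 2)] := by
  have h1 : (∏ i, (E i) ^ (f i)) ≡
      ∏ i, ((1 + (N : ℤ)) ^ (c i) * (r i) ^ N) ^ (f i) [ZMOD ((N : ℤ) ^ 2)] := by
    apply prod_modEq_aux
    intro i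
    rw [hE i]
    exact (Int.mod_modEq _ _).pow _
  have h2 : ∏ i, ((1 + (N : ℤ)) ^ (c i) * (r i) ^ N) ^ (f i) =
      (1 + (N : ℤ)) ^ (∑ i, f i * c i) * (∏ i, (r i) ^ (f i)) ^ N := by
    rw [← Finset.prod_pow_eq_pow_sum, ← Finset.prod_pow, ← Finset.prod_mul_distrib]
    refine Finset.prod_congr rfl fun i _ => ?_
    rw [mul_pow, ← pow_mul, ← pow_mul, ← pow_mul, mul_comm (c i), mul_comm N]
  rw [h2] at h1
  exact h1.trans ((one_add_pow_mod N _).mul_right _)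
end
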